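/- arXiv:2409.01413 — 8 statements merged into one kernel-verified Lean document; each statement's English description precedes it below -/
import Mathlib

section
/- Let (Ω, ℱ, ℙ) be a probability space with a filtration (ℱ_k)_{k∈ℕ}, let (Φ_k)_{k∈ℕ} be a sequence of integrable real-valued random variables adapted to (ℱ_k) with Φ_k ≥ 0 almost surely for all k, let (δ_k)_{k∈ℕ} be a sequence of nonnegative real-valued random variables adapted to (ℱ_k), and let σ > 0. If for every k, 𝔼[Φ_{k+1} | ℱ_k] ≤ Φ_k − σ·δ_k² almost surely, then Σ_{k=0}^∞ δ_k² < ∞ almost surely. -/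
/-!
The conditional decrements `Φ k - 𝔼[Φ (k + 1) | ℱ k]` dominate `σ * δ k ^ 2`, hence are nonnegative,
and their expectations telescope to at most `𝔼[Φ 0]`. By Tonelli's theorem a nonnegative series with
summable expectations is almost surely summable, so `∑ δ k ^ 2` converges by comparison.
-/

open MeasureTheory

theorem summable_sub_succ_of_antitone {a : ℕ → ℝ} (ha : Antitone a)
    (hbdd : BddBelow (Set.range a)) : Summable fun k => a k - a (k + 1) := by
  obtain ⟨c, hc⟩ := hbdd
  refine summable_of_sum_range_le (c := a 0 - c) (fun k => sub_nonneg.2 (ha k.le_succ)) fun n => ?_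
  rw [Finset.sum_range_sub']
  exact sub_le_sub_left (hc (Set.mem_range_self n)) _

section AESummable

variable {α ι : Type*} [Countable ι] {m : MeasurableSpace α} {μ : Measure α}

theorem ae_summable_norm_of_summable_integral_norm {E : Type*} [NormedAddCommGroup E]
    {f : ι → α → E} (hf : ∀ i, Integrable (f i) μ) (hsum : Summable fun i => ∫ x, ‖f i x‖ ∂μ) :
    ∀ᵐ x ∂μ, Summable fun i => ‖f i x‖ := by
  refine summable_norm_of_tsum_eLpNorm_ne_top le_rfl (fun i => (hf i).aestronglyMeasurable) ?_
  simp_rw [eLpNorm_one_eq_lintegral_enorm,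
    ← fun i => ofReal_integral_norm_eq_lintegral_enorm (hf i)]
  exact hsum.tsum_ofReal_ne_top

theorem ae_summable_of_summable_integral {f : ι → α → ℝ} (hf : ∀ i, Integrable (f i) μ)
    (hnonneg : ∀ i, 0 ≤ᵐ[μ] f i) (hsum : Summable fun i => ∫ x, f i x ∂μ) :
    ∀ᵐ x ∂μ, Summable fun i => f i x := by
  have hnorm (i : ι) : ∫ x, ‖f i x‖ ∂μ = ∫ x, f i x ∂μ :=
    integral_congr_ae <| (hnonneg i).mono fun _ hx => Real.norm_of_nonneg hx
  have hsummable := ae_summable_norm_of_summable_integral_norm hf (by simpa only [hnorm] using hsum)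
  exact hsummable.mono fun _ hx => hx.of_norm

end AESummable

section CondExp

variable {Ω : Type*} {m : MeasurableSpace Ω} {μ : Measure Ω}

theorem integral_sub_condExp {E : Type*} [NormedAddCommGroup E] [NormedSpace ℝ E] [CompleteSpace E]
    {𝒢 : MeasurableSpace Ω} (h𝒢 : 𝒢 ≤ m) [SigmaFinite (μ.trim h𝒢)] {f : Ω → E}
    (hf : Integrable f μ) (g : Ω → E) :
    ∫ ω, (f - μ[g | 𝒢]) ω ∂μ = ∫ ω, f ω ∂μ - ∫ ω, g ω ∂μ := by
  rw [integral_sub' hf integrable_condExp, integral_condExp h𝒢]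

theorem ae_summable_sub_condExp {𝒢 : ℕ → MeasurableSpace Ω} (h𝒢 : ∀ k, 𝒢 k ≤ m)
    [∀ k, SigmaFinite (μ.trim (h𝒢 k))] {Φ : ℕ → Ω → ℝ} (hint : ∀ k, Integrable (Φ k) μ)
    (hbdd : BddBelow (Set.range fun k => ∫ ω, Φ k ω ∂μ))
    (hle : ∀ k, μ[Φ (k + 1) | 𝒢 k] ≤ᵐ[μ] Φ k) :
    ∀ᵐ ω ∂μ, Summable fun k => (Φ k - μ[Φ (k + 1) | 𝒢 k]) ω := by
  have hnonneg (k : ℕ) : 0 ≤ᵐ[μ] Φ k - μ[Φ (k + 1) | 𝒢 k] :=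
    (hle k).mono fun _ hω => sub_nonneg.2 hω
  have hintegral (k : ℕ) := integral_sub_condExp (h𝒢 k) (hint k) (Φ (k + 1))
  have hanti : Antitone fun k => ∫ ω, Φ k ω ∂μ := antitone_nat_of_succ_le fun k =>
    sub_nonneg.1 <| (integral_nonneg_of_ae (hnonneg k)).trans_eq (hintegral k)
  refine ae_summable_of_summable_integral (fun k => (hint k).sub integrable_condExp) hnonneg ?_
  simpa only [hintegral] using summable_sub_succ_of_antitone hanti hbdd

theorem stmt7_general {𝒢 : ℕ → MeasurableSpace Ω} (h𝒢 : ∀ k, 𝒢 k ≤ m)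
    [∀ k, SigmaFinite (μ.trim (h𝒢 k))] {Φ D : ℕ → Ω → ℝ} (hint : ∀ k, Integrable (Φ k) μ)
    (hbdd : BddBelow (Set.range fun k => ∫ ω, Φ k ω ∂μ)) (hD : ∀ k, 0 ≤ᵐ[μ] D k)
    (hcond : ∀ k, μ[Φ (k + 1) | 𝒢 k] ≤ᵐ[μ] Φ k - D k) :
    ∀ᵐ ω ∂μ, Summable fun k => D k ω := by
  have hle (k : ℕ) : μ[Φ (k + 1) | 𝒢 k] ≤ᵐ[μ] Φ k :=
    (hcond k).trans <| (hD k).mono fun _ hω => sub_le_self _ hω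
  filter_upwards [ae_summable_sub_condExp h𝒢 hint hbdd hle, ae_all_iff.2 hD, ae_all_iff.2 hcond]
    with ω hsum hDω hcondω
  exact hsum.of_nonneg_of_le hDω fun k => le_sub_comm.1 (hcondω k)

end CondExp

theorem stmt7 {Ω : Type*} {m : MeasurableSpace Ω} (μ : Measure Ω) [IsProbabilityMeasure μ]
    (ℱ : Filtration ℕ m) (Φ δ : ℕ → Ω → ℝ) (σ : ℝ) (hσ : 0 < σ)
    (hΦadapted : Adapted ℱ Φ) (hΦint : ∀ k, Integrable (Φ k) μ)
    (hΦnonneg : ∀ k, ∀ᵐ ω ∂μ, 0 ≤ Φ k ω)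
    (hδadapted : Adapted ℱ δ) (hδnonneg : ∀ k ω, 0 ≤ δ k ω)
    (hcond : ∀ k, ∀ᵐ ω ∂μ, (μ[Φ (k + 1) | ℱ k]) ω ≤ Φ k ω - σ * (δ k ω) ^ 2) :
    ∀ᵐ ω ∂μ, Summable (fun k => (δ k ω) ^ 2) := by
  have hsum := stmt7_general (D := fun k ω => σ * δ k ω ^ 2) ℱ.le hΦint
    ⟨0, Set.forall_mem_range.2 fun k => integral_nonneg_of_ae (hΦnonneg k)⟩
    (fun k => ae_of_all _ fun ω => by positivity) hcond
  simpa only [summable_mul_left_iff hσ.ne'] using hsum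
end

section
/- Let f : ℝ^n → ℝ be continuously differentiable, let 1 ≤ K ≤ n, and let x* ∈ C_K. Let σ be a permutation of {1,…,n} and set I = {σ(1),…,σ(K)}. Suppose there is a sequence (v_k) in ℝ^n with v_k → x* such that for every k, |[v_k]_{σ(1)}| ≥ |[v_k]_{σ(2)}| ≥ … ≥ |[v_k]_{σ(n)}|, and a sequence (x_k) in ℝ^n with x_k → x* such that [∇f(x_k)]_i → 0 for every i ∈ I. Then |[x*]_{σ(1)}| ≥ … ≥ |[x*]_{σ(n)}|, the inactive set satisfies I_ℐ(x*) ⊆ I, and [∇f(x*)]_i = 0 for every i ∈ I_ℐ(x*); in particular, if ‖x*‖₀ = K then x* is a Basic Feasible point of f. -/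
open scoped Classical

/-- The number of nonzero components of `x` (the so-called `ℓ₀` "norm"). -/
noncomputable def zeroNorm {n : ℕ} (x : EuclideanSpace ℝ (Fin n)) : ℕ :=
  (Finset.univ.filter fun i => x i ≠ 0).card

/-- `x` is a Basic Feasible point of `f` for the cardinality constraint `‖x‖₀ ≤ K`. -/
noncomputable def BasicFeasible {n : ℕ} (f : EuclideanSpace ℝ (Fin n) → ℝ) (K : ℕ)
    (x : EuclideanSpace ℝ (Fin n)) : Prop :=
  zeroNorm x ≤ K ∧
    (zeroNorm x < K → gradient f x = 0) ∧
    (zeroNorm x = K → ∀ i, x i ≠ 0 → gradient f x i = 0)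

/-!
The vectors whose moduli are antitone along `σ` form a closed set, so the limit `x` of the `v k`
inherits the ordering. An ordered vector has its nonzero entries exactly at the first `‖x‖₀ ≤ K`
positions, hence within `I`, and there the partial derivatives of `f` at `x` vanish, being limits
of those at the points `u k`.
-/

open Filter Topology

theorem antitone_abs_apply_of_tendsto {ι κ α : Type*} [Preorder κ] {l : Filter α} [l.NeBot]
    {v : α → EuclideanSpace ℝ ι} {x : EuclideanSpace ℝ ι} {σ : κ → ι} (hv : Tendsto v l (𝓝 x))
    (hanti : ∀ᶠ k in l, Antitone fun j => |v k (σ j)|) : Antitone fun j => |x (σ j)| := by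
  have hclosed : IsClosed {y : EuclideanSpace ℝ ι | Antitone fun j => |y (σ j)|} :=
    isClosed_antitone.preimage (by fun_prop)
  exact hclosed.mem_of_tendsto hv hanti

section Gradient

variable {𝕜 : Type*} [RCLike 𝕜] {m : WithTop ℕ∞}

theorem continuousAt_gradient_of_contDiffAt {F : Type*} [NormedAddCommGroup F]
    [InnerProductSpace 𝕜 F] [CompleteSpace F] {f : F → 𝕜} {x : F} (hf : ContDiffAt 𝕜 m f x)
    (hm : m ≠ 0) : ContinuousAt (gradient f) x :=
  (InnerProductSpace.toDual 𝕜 F).symm.continuous.continuousAt.comp (hf.continuousAt_fderiv hm)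

theorem gradient_apply_eq_of_tendsto {ι α : Type*} [Fintype ι] {l : Filter α} [l.NeBot]
    {f : EuclideanSpace 𝕜 ι → 𝕜} {x : EuclideanSpace 𝕜 ι} (hf : ContDiffAt 𝕜 m f x) (hm : m ≠ 0)
    {u : α → EuclideanSpace 𝕜 ι} (hu : Tendsto u l (𝓝 x)) {i : ι} {c : 𝕜}
    (hc : Tendsto (fun k => gradient f (u k) i) l (𝓝 c)) : gradient f x i = c := by
  have hgrad : Tendsto (fun k => gradient f (u k)) l (𝓝 (gradient f x)) :=
    (continuousAt_gradient_of_contDiffAt hf hm).tendsto.comp hu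
  have hcoord : Tendsto (fun k => gradient f (u k) i) l (𝓝 (gradient f x i)) :=
    ((EuclideanSpace.proj (𝕜 := 𝕜) i).continuous.tendsto _).comp hgrad
  exact tendsto_nhds_unique hcoord hc

end Gradient

section ZeroNorm

variable {n : ℕ} {x : EuclideanSpace ℝ (Fin n)}

theorem card_filter_apply_equiv_ne_zero {κ : Type*} [Fintype κ] (x : EuclideanSpace ℝ (Fin n))
    (σ : κ ≃ Fin n) : (Finset.univ.filter fun j => x (σ j) ≠ 0).card = zeroNorm x :=
  Finset.card_equiv σ (by simp)

theorem lt_zeroNorm_iff_apply_ne_zero_of_antitone {σ : Equiv.Perm (Fin n)}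
    (hσ : Antitone fun j => |x (σ j)|) {j : Fin n} : (j : ℕ) < zeroNorm x ↔ x (σ j) ≠ 0 := by
  simpa only [abs_pos, card_filter_apply_equiv_ne_zero] using
    Tuple.lt_card_gt_iff_apply_gt_of_antitone (j := j) (a := 0) hσ

theorem basicFeasible_zeroNorm {f : EuclideanSpace ℝ (Fin n) → ℝ}
    (hgrad : ∀ i, x i ≠ 0 → gradient f x i = 0) : BasicFeasible f (zeroNorm x) x :=
  ⟨le_rfl, fun hlt => absurd hlt (lt_irrefl _), fun _ => hgrad⟩

end ZeroNorm

theorem stmt8_general {n K : ℕ} {f : EuclideanSpace ℝ (Fin n) → ℝ} {x : EuclideanSpace ℝ (Fin n)}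
    (hf : ContDiffAt ℝ 1 f x) (hx : zeroNorm x ≤ K) {σ : Equiv.Perm (Fin n)} {I : Finset (Fin n)}
    (hI : I = (Finset.univ.filter fun i : Fin n => (i : ℕ) < K).image σ)
    {α β : Type*} {l : Filter α} [l.NeBot] {l' : Filter β} [l'.NeBot]
    {v : α → EuclideanSpace ℝ (Fin n)} (hv : Tendsto v l (𝓝 x))
    (hvsort : ∀ᶠ k in l, ∀ i j : Fin n, i ≤ j → |v k (σ j)| ≤ |v k (σ i)|)
    {u : β → EuclideanSpace ℝ (Fin n)} (hu : Tendsto u l' (𝓝 x))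
    (hgrad : ∀ i ∈ I, Tendsto (fun k => gradient f (u k) i) l' (𝓝 0)) :
    (∀ i j : Fin n, i ≤ j → |x (σ j)| ≤ |x (σ i)|) ∧
    (∀ i, x i ≠ 0 → i ∈ I) ∧
    (∀ i, x i ≠ 0 → gradient f x i = 0) ∧
    (zeroNorm x = K → BasicFeasible f K x) := by
  have hsort : Antitone fun j => |x (σ j)| :=
    antitone_abs_apply_of_tendsto hv (hvsort.mono fun _ h i j => h i j)
  have hsupp : ∀ i, x i ≠ 0 → i ∈ I := by
    intro i hi
    obtain ⟨j, rfl⟩ := σ.surjective i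
    have hj : (j : ℕ) < K := ((lt_zeroNorm_iff_apply_ne_zero_of_antitone hsort).2 hi).trans_le hx
    exact hI ▸ Finset.mem_image_of_mem σ (Finset.mem_filter.2 ⟨Finset.mem_univ j, hj⟩)
  have hzero : ∀ i, x i ≠ 0 → gradient f x i = 0 := fun i hi =>
    gradient_apply_eq_of_tendsto hf one_ne_zero hu (hgrad i (hsupp i hi))
  exact ⟨fun _ _ hij => hsort hij, hsupp, hzero, fun hK => hK ▸ basicFeasible_zeroNorm hzero⟩

theorem stmt8 {n : ℕ} (f : EuclideanSpace ℝ (Fin n) → ℝ) (hf : ContDiff ℝ 1 f)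
    (K : ℕ) (hK1 : 1 ≤ K) (hKn : K ≤ n)
    (xstar : EuclideanSpace ℝ (Fin n)) (hxstar : zeroNorm xstar ≤ K)
    (σ : Equiv.Perm (Fin n)) (I : Finset (Fin n))
    (hI : I = (Finset.univ.filter fun i : Fin n => (i : ℕ) < K).image σ)
    (v : ℕ → EuclideanSpace ℝ (Fin n))
    (hv : Filter.Tendsto v Filter.atTop (nhds xstar))
    (hvsort : ∀ k, ∀ i j : Fin n, i ≤ j → |v k (σ j)| ≤ |v k (σ i)|)
    (xseq : ℕ → EuclideanSpace ℝ (Fin n))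
    (hxseq : Filter.Tendsto xseq Filter.atTop (nhds xstar))
    (hgrad : ∀ i ∈ I,
      Filter.Tendsto (fun k => gradient f (xseq k) i) Filter.atTop (nhds 0)) :
    (∀ i j : Fin n, i ≤ j → |xstar (σ j)| ≤ |xstar (σ i)|) ∧
    (∀ i, xstar i ≠ 0 → i ∈ I) ∧
    (∀ i, xstar i ≠ 0 → gradient f xstar i = 0) ∧
    (zeroNorm xstar = K → BasicFeasible f K xstar) :=
  stmt8_general hf.contDiffAt hxstar hI hv (.of_forall hvsort) hxseq hgrad
end

section
/- Let f : ℝ^n → ℝ be continuously differentiable, let 1 ≤ K ≤ n, and let x* ∈ C_K be a Basic Feasible point of f. If either ∇f(x*) = 0 or ‖x*‖₀ = K, then there exists L̄ > 0 such that x* is L̄-stationary. -/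
/-!
If `‖x‖₀ < K` then `∇f(x) = 0` and `x` is the point it has to approximate. If `‖x‖₀ = K`, then
`y = x - L⁻¹ • ∇f(x)` agrees with `x` on the support of `x`. For large `L` its entries off that
support are so small that none exceeds a nonzero entry of `x` in absolute value. So `x` keeps `K`
entries of `y` that are largest in absolute value and discards the others. The squared distance from
`y` to a `K`-sparse `z` is at least the sum of the squares of the entries of `y` where `z` vanishes,
at least `n - K` of them, and that sum is least when they are the smallest entries.
-/

open scoped Classical

/-- `x` is `L`-stationary: it minimizes the distance to `x - (1/L) • ∇f(x)` over `C_K`. -/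
noncomputable def LStationary {n : ℕ} (f : EuclideanSpace ℝ (Fin n) → ℝ) (K : ℕ) (L : ℝ)
    (x : EuclideanSpace ℝ (Fin n)) : Prop :=
  zeroNorm x ≤ K ∧
    ∀ z : EuclideanSpace ℝ (Fin n), zeroNorm z ≤ K →
      ‖x - (x - L⁻¹ • gradient f x)‖ ≤ ‖z - (x - L⁻¹ • gradient f x)‖

open Finset Filter

section SumComparison

variable {ι κ M : Type*} [AddCommMonoid M] [PartialOrder M]

lemma sum_le_sum_of_card_le [IsOrderedAddMonoid M] {s : Finset ι} {t : Finset κ} {f : ι → M}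
    {g : κ → M} (hcard : #s ≤ #t) (hg : ∀ j ∈ t, 0 ≤ g j) (hfg : ∀ i ∈ s, ∀ j ∈ t, f i ≤ g j) :
    ∑ i ∈ s, f i ≤ ∑ j ∈ t, g j := by
  obtain ⟨e⟩ : Nonempty (s ↪ t) := Function.Embedding.nonempty_of_card_le (by simpa using hcard)
  calc ∑ i ∈ s, f i = ∑ i : s, f i := (sum_coe_sort s f).symm
    _ ≤ ∑ i : s, g (e i) := sum_le_sum fun i _ ↦ hfg i i.2 (e i) (e i).2
    _ = ∑ j ∈ univ.map e, g j := (sum_map univ e fun j : t ↦ g j).symm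
    _ ≤ ∑ j : t, g j := sum_le_sum_of_subset_of_nonneg (subset_univ _) fun j _ _ ↦ hg j j.2
    _ = ∑ j ∈ t, g j := sum_coe_sort t g

lemma sum_le_sum_of_card_le_of_forall_mem_le_notMem [IsOrderedCancelAddMonoid M] {s t : Finset ι}
    {f : ι → M} (hcard : #s ≤ #t) (hf : ∀ i ∈ t, i ∉ s → 0 ≤ f i)
    (hst : ∀ i ∈ s, ∀ j ∉ s, f i ≤ f j) :
    ∑ i ∈ s, f i ≤ ∑ i ∈ t, f i := by
  rw [← sum_sdiff_le_sum_sdiff]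
  refine sum_le_sum_of_card_le (card_sdiff_le_card_sdiff_iff.mpr hcard) ?_ ?_
  · intro j hj
    exact hf j (mem_sdiff.mp hj).1 (mem_sdiff.mp hj).2
  · intro i hi j hj
    exact hst i (mem_sdiff.mp hi).1 j (mem_sdiff.mp hj).2

end SumComparison

section HardThresholding

variable {𝕜 ι : Type*} [RCLike 𝕜] [Fintype ι]

lemma sum_norm_sq_filter_eq_zero_le_norm_sub_sq (z y : EuclideanSpace 𝕜 ι) :
    ∑ i with z i = 0, ‖y i‖ ^ 2 ≤ ‖z - y‖ ^ 2 := by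
  rw [EuclideanSpace.norm_sq_eq]
  calc ∑ i with z i = 0, ‖y i‖ ^ 2 = ∑ i with z i = 0, ‖(z - y) i‖ ^ 2 :=
        sum_congr rfl fun i hi ↦ by simp [(mem_filter.mp hi).2]
    _ ≤ ∑ i, ‖(z - y) i‖ ^ 2 :=
        sum_le_sum_of_subset_of_nonneg (filter_subset _ _) fun _ _ _ ↦ sq_nonneg _

lemma norm_sub_sq_eq_sum_norm_sq_filter_eq_zero {x y : EuclideanSpace 𝕜 ι}
    (hxy : ∀ i, x i ≠ 0 → y i = x i) :
    ‖x - y‖ ^ 2 = ∑ i with x i = 0, ‖y i‖ ^ 2 := by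
  rw [EuclideanSpace.norm_sq_eq, sum_filter]
  refine sum_congr rfl fun i _ ↦ ?_
  split_ifs with hi
  · simp [hi]
  · simp [hxy i hi]

lemma norm_sub_le_norm_sub_of_card_support_le {x y z : EuclideanSpace 𝕜 ι}
    (hxy : ∀ i, x i ≠ 0 → y i = x i) (hdom : ∀ i j, x i = 0 → x j ≠ 0 → ‖y i‖ ≤ ‖x j‖)
    (hz : #{i | z i ≠ 0} ≤ #{i | x i ≠ 0}) :
    ‖x - y‖ ≤ ‖z - y‖ := by
  have hcard : #{i | x i = 0} ≤ #{i | z i = 0} := by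
    have card_zeros_add_card_support (w : EuclideanSpace 𝕜 ι) :
        #{i | w i = 0} + #{i | w i ≠ 0} = #(univ : Finset ι) :=
      card_filter_add_card_filter_not _
    have hx_total := card_zeros_add_card_support x
    have hz_total := card_zeros_add_card_support z
    omega
  have hsmall : ∀ i ∈ ({i | x i = 0} : Finset ι), ∀ j ∉ ({i | x i = 0} : Finset ι),
      ‖y i‖ ^ 2 ≤ ‖y j‖ ^ 2 := by
    intro i hi j hj
    simp only [mem_filter_univ] at hi hj
    rw [hxy j hj]
    gcongr
    exact hdom i j hi hj
  refine le_of_sq_le_sq ?_ (norm_nonneg _)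
  calc ‖x - y‖ ^ 2 = ∑ i with x i = 0, ‖y i‖ ^ 2 := norm_sub_sq_eq_sum_norm_sq_filter_eq_zero hxy
    _ ≤ ∑ i with z i = 0, ‖y i‖ ^ 2 :=
        sum_le_sum_of_card_le_of_forall_mem_le_notMem hcard (fun _ _ _ ↦ sq_nonneg _) hsmall
    _ ≤ ‖z - y‖ ^ 2 := sum_norm_sq_filter_eq_zero_le_norm_sub_sq z y

end HardThresholding

section Stationarity

variable {n K : ℕ} {f : EuclideanSpace ℝ (Fin n) → ℝ} {x : EuclideanSpace ℝ (Fin n)} {L : ℝ}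

lemma LStationary.of_gradient_eq_zero (hx : zeroNorm x ≤ K) (hgrad : gradient f x = 0) :
    LStationary f K L x :=
  ⟨hx, fun z _ ↦ by simp [hgrad]⟩

lemma LStationary.of_abs_gradient_le (hL : 0 < L) (hx : zeroNorm x = K)
    (hsupp : ∀ i, x i ≠ 0 → gradient f x i = 0)
    (hdom : ∀ i j, x i = 0 → x j ≠ 0 → |gradient f x i| ≤ L * |x j|) :
    LStationary f K L x := by
  refine ⟨hx.le, fun z hz ↦ norm_sub_le_norm_sub_of_card_support_le ?_ ?_ (hz.trans hx.ge)⟩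
  · intro i hi
    simp [hsupp i hi]
  · intro i j hi hj
    calc ‖(x - L⁻¹ • gradient f x) i‖ = L⁻¹ * |gradient f x i| := by
          simp [hi, abs_of_pos hL]
      _ ≤ |x j| := (inv_mul_le_iff₀ hL).mpr (hdom i j hi hj)

lemma eventually_abs_le_mul_abs {ι κ : Type*} [Finite ι] [Finite κ] (g : ι → ℝ) (x : κ → ℝ) :
    ∀ᶠ L in atTop, ∀ i j, x j ≠ 0 → |g i| ≤ L * |x j| := by
  simp only [eventually_all]
  intro i j hj
  exact (tendsto_id.atTop_mul_const (abs_pos.mpr hj)).eventually_ge_atTop |g i|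

theorem stmt9_general (_hf : DifferentiableAt ℝ f x) (hBF : BasicFeasible f K x) :
    ∀ᶠ L in atTop, LStationary f K L x := by
  obtain ⟨hx, hgrad, hsupp⟩ := hBF
  rcases hx.lt_or_eq with hlt | heq
  · exact .of_forall fun L ↦ .of_gradient_eq_zero hx (hgrad hlt)
  · filter_upwards [eventually_gt_atTop 0, eventually_abs_le_mul_abs (gradient f x).ofLp x.ofLp]
      with L hL hdom
    exact .of_abs_gradient_le hL heq (hsupp heq) fun i j _ hj ↦ hdom i j hj

end Stationarity

theorem stmt9 {n : ℕ} (f : EuclideanSpace ℝ (Fin n) → ℝ) (hf : ContDiff ℝ 1 f)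
    (K : ℕ) (hK1 : 1 ≤ K) (hKn : K ≤ n)
    (xstar : EuclideanSpace ℝ (Fin n)) (hBF : BasicFeasible f K xstar)
    (hcase : gradient f xstar = 0 ∨ zeroNorm xstar = K) :
    ∃ L : ℝ, 0 < L ∧ LStationary f K L xstar :=
  ((eventually_gt_atTop 0).and
    (stmt9_general (hf.differentiable one_ne_zero xstar) hBF)).exists
end

section
/- Let x ∈ ℝ^n, let 1 ≤ K ≤ n, and let σ be a permutation of {1,…,n} such that |x_{σ(1)}| ≥ |x_{σ(2)}| ≥ … ≥ |x_{σ(n)}|. Define z ∈ ℝ^n by z_{σ(i)} = x_{σ(i)} for i ≤ K and z_{σ(i)} = 0 for i > K. Then z ∈ C_K and ‖z − x‖ ≤ ‖w − x‖ for every w ∈ C_K; that is, z is an orthogonal projection of x onto C_K. -/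
open scoped Classical

/-!
Let `T` hold the positions of the `K` components of `x` of largest norm, and let `w` have support
`S` with `|S| ≤ |T|`. Since `|S \ T| ≤ |T \ S|`, some permutation sends every index outside `T` to
an index outside `S` at which `x` is at least as large: it fixes the indices outside both sets and
moves `S \ T` into `T \ S`. The errors of `z` live outside `T`, and `w` errs by all of `x` outside
`S`, so the permutation matches each error of `z` with an error of `w` at least as large. This
compares the two errors in every `ℓᵖ` norm at once.
-/

open scoped ENNReal

lemma exists_perm_notMem_of_card_le {ι : Type*} [Finite ι] {S T : Finset ι}
    (hST : S.card ≤ T.card) :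
    ∃ π : Equiv.Perm ι, ∀ i ∉ T, π i ∉ S ∧ (π i = i ∨ π i ∈ T) := by
  have := Fintype.ofFinite ι
  obtain ⟨g⟩ : Nonempty (↥(S \ T) ↪ ↥(T \ S)) :=
    Function.Embedding.nonempty_of_card_le <| by
      simpa only [Fintype.card_coe, Finset.card_sdiff_le_card_sdiff_iff] using hST
  let e : ι → ι := fun i => if h : i ∈ S \ T then g ⟨i, h⟩ else i
  have he : ∀ i ∉ T, e i ∉ S ∧ (e i = i ∨ e i ∈ T) := by
    intro i hi
    by_cases h : i ∈ S \ T
    · have hg := Finset.mem_sdiff.mp (g ⟨i, h⟩).2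
      simp only [e, dif_pos h]
      exact ⟨hg.2, Or.inr hg.1⟩
    · simp only [e, dif_neg h, true_or, and_true]
      exact fun hS => h (Finset.mem_sdiff.mpr ⟨hS, hi⟩)
  have he_inj : Set.InjOn e {i | i ∉ T} := by
    intro i hi j hj hij
    have hgT (k : ↥(S \ T)) : (g k : ι) ∈ T := (Finset.mem_sdiff.mp (g k).2).1
    by_cases hi' : i ∈ S \ T <;> by_cases hj' : j ∈ S \ T <;>
      simp only [e, hi', hj', dif_pos, dif_neg, not_false_eq_true] at hij
    · exact congrArg Subtype.val (g.injective (Subtype.ext hij))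
    · exact absurd (hij ▸ hgT _) hj
    · exact absurd (hij ▸ hgT _) hi
    · exact hij
  obtain ⟨π, hπ⟩ := Set.MapsTo.exists_equiv_extend_of_card_eq (t := Finset.univ)
    Finset.card_univ.symm (fun i _ => Finset.mem_coe.mpr (Finset.mem_univ (e i))) he_inj
  refine ⟨π.trans (Equiv.subtypeUnivEquiv Finset.mem_univ), fun i hi => ?_⟩
  simpa only [Equiv.trans_apply, Equiv.subtypeUnivEquiv_apply, hπ i hi] using he i hi

lemma piLp_norm_le_norm_of_equiv {ι κ : Type*} [Fintype ι] [Fintype κ] {p : ℝ≥0∞}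
    {E : ι → Type*} {F : κ → Type*}
    [∀ i, SeminormedAddCommGroup (E i)] [∀ k, SeminormedAddCommGroup (F k)]
    {x : PiLp p E} {y : PiLp p F} (e : ι ≃ κ) (hxy : ∀ i, ‖x i‖ ≤ ‖y (e i)‖) :
    ‖x‖ ≤ ‖y‖ := by
  rcases p.trichotomy with rfl | rfl | hp
  · rw [PiLp.norm_eq_card, PiLp.norm_eq_card, Nat.cast_le]
    refine Finset.card_le_card_of_injOn e (fun i hi => ?_) e.injective.injOn
    have hi' : ‖x i‖ ≠ 0 := by simpa using hi
    have : ‖y (e i)‖ ≠ 0 := (((norm_nonneg _).lt_of_ne' hi').trans_le (hxy i)).ne'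
    simpa using this
  · rw [PiLp.norm_eq_ciSup, PiLp.norm_eq_ciSup, ← e.iSup_comp]
    exact ciSup_mono (Set.finite_range _).bddAbove hxy
  · rw [PiLp.norm_eq_sum hp, PiLp.norm_eq_sum hp,
      ← e.sum_comp fun k => ‖y k‖ ^ p.toReal]
    gcongr with i
    exact hxy i

section BestApproximation

variable {ι : Type*} [Fintype ι] {p : ℝ≥0∞} {E : ι → Type*}

lemma hammingNorm_le_card_of_eq_zero [∀ i, Zero (E i)] [∀ i, DecidableEq (E i)]
    {x : ∀ i, E i} {T : Finset ι} (hx : ∀ i ∉ T, x i = 0) : hammingNorm x ≤ T.card :=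
  Finset.card_le_card fun i hi => by_contra fun hT => (Finset.mem_filter.mp hi).2 (hx i hT)

variable [∀ i, SeminormedAddCommGroup (E i)] [∀ i, DecidableEq (E i)]

lemma norm_sub_le_norm_sub_of_hammingNorm_le_card {x z w : PiLp p E} {T : Finset ι}
    (hT : ∀ i ∈ T, ∀ j ∉ T, ‖x j‖ ≤ ‖x i‖)
    (hzT : ∀ i ∈ T, z i = x i) (hz0 : ∀ i ∉ T, z i = 0)
    (hw : hammingNorm w.ofLp ≤ T.card) : ‖z - x‖ ≤ ‖w - x‖ := by
  obtain ⟨π, hπ⟩ := exists_perm_notMem_of_card_le hw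
  refine piLp_norm_le_norm_of_equiv π fun i => ?_
  by_cases hi : i ∈ T
  · simp only [PiLp.sub_apply, hzT i hi, sub_self, norm_zero, norm_nonneg]
  · obtain ⟨hπw, hπT⟩ := hπ i hi
    have hwπ : w (π i) = 0 := by simpa using hπw
    have hxπ : ‖x i‖ ≤ ‖x (π i)‖ := hπT.elim (fun h => by rw [h]) fun h => hT _ h i hi
    simpa only [PiLp.sub_apply, hz0 i hi, hwπ, zero_sub, norm_neg] using hxπ

theorem stmt10_general {n : ℕ} (x : PiLp p E) (K : ℕ) (σ : Fin n ≃ ι)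
    (hsort : ∀ i j : Fin n, i ≤ j → ‖x (σ j)‖ ≤ ‖x (σ i)‖) (z : PiLp p E)
    (hz : ∀ i : Fin n, z (σ i) = if (i : ℕ) < K then x (σ i) else 0) :
    hammingNorm z.ofLp ≤ K ∧
      ∀ w : PiLp p E, hammingNorm w.ofLp ≤ K → ‖z - x‖ ≤ ‖w - x‖ := by
  let T : Finset ι := (Finset.univ.filter fun i : Fin n => (i : ℕ) < K).map σ.toEmbedding
  have hmem (i : Fin n) : σ i ∈ T ↔ (i : ℕ) < K := by simp [T]
  have hcard : T.card = min n K := by rw [Finset.card_map, Fin.card_filter_val_lt]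
  have hT : ∀ i ∈ T, ∀ j ∉ T, ‖x j‖ ≤ ‖x i‖ := by
    simp only [σ.surjective.forall, hmem, not_lt]
    exact fun i hi j hj => hsort i j (Fin.le_def.mpr (hi.le.trans hj))
  have hzT : ∀ i ∈ T, z i = x i := by
    simp only [σ.surjective.forall, hmem]
    exact fun i hi => (hz i).trans (if_pos hi)
  have hz0 : ∀ i ∉ T, z i = 0 := by
    simp only [σ.surjective.forall, hmem]
    exact fun i hi => (hz i).trans (if_neg hi)
  have hn (w : PiLp p E) : hammingNorm w.ofLp ≤ n :=
    hammingNorm_le_card_fintype.trans_eq (by rw [← Fintype.card_congr σ, Fintype.card_fin])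
  exact ⟨(hammingNorm_le_card_of_eq_zero hz0).trans (hcard.trans_le (min_le_right n K)),
    fun w hw => norm_sub_le_norm_sub_of_hammingNorm_le_card hT hzT hz0
      ((le_min (hn w) hw).trans_eq hcard.symm)⟩

end BestApproximation

theorem stmt10 {n : ℕ} (x : EuclideanSpace ℝ (Fin n))
    (K : ℕ) (hK1 : 1 ≤ K) (hKn : K ≤ n)
    (σ : Equiv.Perm (Fin n))
    (hsort : ∀ i j : Fin n, i ≤ j → |x (σ j)| ≤ |x (σ i)|)
    (z : EuclideanSpace ℝ (Fin n))
    (hz : ∀ i : Fin n, z (σ i) = if (i : ℕ) < K then x (σ i) else 0) :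
    zeroNorm z ≤ K ∧
      ∀ w : EuclideanSpace ℝ (Fin n), zeroNorm w ≤ K → ‖z - x‖ ≤ ‖w - x‖ :=
  stmt10_general x K σ hsort z hz
end

section
/- Let f : ℝ^n → ℝ be continuously differentiable, let 1 ≤ K ≤ n, let L > 0, and let x* ∈ ℝ^n. Then x* is L-stationary for f if and only if ‖x*‖₀ ≤ K and, for every i ∈ {1,…,n}: |[∇f(x*)]_i| ≤ L·M_K(x*) if x*_i = 0, and [∇f(x*)]_i = 0 if x*_i ≠ 0. -/
open scoped Classical

/-- `MK K x` is the `K`-th largest value among `|x 1|, …, |x n|`, characterized as the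
largest `m` such that some `K` components of `x` all have absolute value at least `m`. -/
noncomputable def MK {n : ℕ} (K : ℕ) (x : EuclideanSpace ℝ (Fin n)) : ℝ :=
  sSup {m : ℝ | ∃ s : Finset (Fin n), s.card = K ∧ ∀ i ∈ s, m ≤ |x i|}

/-!
Among the vectors supported in a fixed set `T`, the closest one to `a` is the truncation of `a` to
`T`, at squared distance `‖a‖ ^ 2 - ∑ i ∈ T, a i ^ 2`. Hence `x` is a best `K`-sparse approximation
of `a` exactly when it agrees with `a` on its own support `S` and `S` maximizes `∑ i ∈ T, a i ^ 2`
over all `T` with at most `K` elements. Enlarging `S` by one index, or exchanging one index of `S`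
for another, shows that `MK K x ^ 2` separates the values of `a i ^ 2` on a maximizing `S` from
those off `S`; conversely, such a threshold bounds every competing sum. Apply this to
`a = x - L⁻¹ • ∇f(x)`.
-/

section SumMaximizer

variable {ι R : Type*} [AddCommGroup R] [PartialOrder R] [IsOrderedAddMonoid R]
  {w : ι → R} {K : ℕ} {S : Finset ι}

/-- `S` maximizes the total weight `∑ i ∈ S, w i` among the index sets with at most `K` elements.
This is the combinatorial form of best sparse approximation. -/
def IsSumMaximizer (w : ι → R) (K : ℕ) (S : Finset ι) : Prop :=
  S.card ≤ K ∧ ∀ T : Finset ι, T.card ≤ K → ∑ i ∈ T, w i ≤ ∑ i ∈ S, w i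

theorem sum_le_sum_of_threshold {T : Finset ι} {c : R} (hS : ∀ i ∈ S, c ≤ w i)
    (hSc : ∀ i ∉ S, w i ≤ c) (hc : T.card • c ≤ S.card • c) :
    ∑ i ∈ T, w i ≤ ∑ i ∈ S, w i := by
  have excess_le : ∑ i ∈ T, (w i - c) ≤ ∑ i ∈ S, (w i - c) :=
    calc ∑ i ∈ T, (w i - c)
      _ ≤ ∑ i ∈ T ∩ S, (w i - c) :=
        Finset.sum_le_sum_of_subset_of_nonpos' Finset.inter_subset_left fun i hiT hi =>
          sub_nonpos.2 (hSc i fun hiS => hi (Finset.mem_inter.2 ⟨hiT, hiS⟩))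
      _ ≤ ∑ i ∈ S, (w i - c) :=
        Finset.sum_le_sum_of_subset_of_nonneg Finset.inter_subset_right fun i hiS _ =>
          sub_nonneg.2 (hS i hiS)
  simpa only [Finset.sum_sub_distrib, Finset.sum_const, sub_add_cancel] using
    add_le_add excess_le hc

theorem IsSumMaximizer.nonpos_of_notMem (h : IsSumMaximizer w K S) (hS : S.card < K) {i : ι}
    (hi : i ∉ S) : w i ≤ 0 := by
  have sum_insert_le := h.2 (insert i S) ((Finset.card_insert_le i S).trans hS)
  rwa [Finset.sum_insert hi, add_le_iff_nonpos_left] at sum_insert_le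

theorem IsSumMaximizer.le_of_notMem_of_mem (h : IsSumMaximizer w K S) {i j : ι} (hi : i ∉ S)
    (hj : j ∈ S) : w i ≤ w j := by
  have hi' : i ∉ S.erase j := fun hmem => hi (Finset.mem_of_mem_erase hmem)
  have card_exchange : (insert i (S.erase j)).card = S.card := by
    rw [Finset.card_insert_of_notMem hi', Finset.card_erase_add_one hj]
  have sum_exchange_le := h.2 (insert i (S.erase j)) (card_exchange.trans_le h.1)
  rwa [Finset.sum_insert hi', ← Finset.add_sum_erase S w hj, add_le_add_iff_right]
    at sum_exchange_le

end SumMaximizer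

section SparseApproximation

variable {ι : Type*} {K : ℕ} {a x : EuclideanSpace ℝ ι}

/-- The hard truncation of `a` to `T`: the coordinates of `a` outside `T` are set to zero. It is
the best approximation of `a` supported in `T`. -/
noncomputable def truncate (T : Finset ι) (a : EuclideanSpace ℝ ι) : EuclideanSpace ℝ ι :=
  WithLp.toLp 2 ((T : Set ι).indicator a)

theorem truncate_apply_of_mem {T : Finset ι} {i : ι} (hi : i ∈ T) : truncate T a i = a i :=
  Set.indicator_of_mem (Finset.mem_coe.2 hi) a

variable [Fintype ι]

/-- The support of `x` as a `Finset`, so that `zeroNorm x` is its cardinality. -/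
noncomputable def supp (x : EuclideanSpace ℝ ι) : Finset ι :=
  Finset.univ.filter fun i => x i ≠ 0

theorem mem_supp {i : ι} : i ∈ supp x ↔ x i ≠ 0 :=
  Finset.mem_filter_univ i

theorem notMem_supp {i : ι} : i ∉ supp x ↔ x i = 0 :=
  mem_supp.not_left

theorem supp_truncate_subset (T : Finset ι) (a : EuclideanSpace ℝ ι) :
    supp (truncate T a) ⊆ T := fun _ hi =>
  Finset.mem_coe.1 (Set.mem_of_indicator_ne_zero (mem_supp.1 hi))

theorem norm_sub_sq_of_supp_subset {z : EuclideanSpace ℝ ι} {T : Finset ι} (hz : supp z ⊆ T)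
    (a : EuclideanSpace ℝ ι) :
    ‖z - a‖ ^ 2 = ‖a‖ ^ 2 - ∑ i ∈ T, a i ^ 2 + ∑ i ∈ T, (z i - a i) ^ 2 := by
  have sum_compl : ∑ i ∈ Tᶜ, (z i - a i) ^ 2 = ∑ i ∈ Tᶜ, a i ^ 2 :=
    Finset.sum_congr rfl fun i hi => by
      rw [notMem_supp.1 fun hiz => Finset.mem_compl.1 hi (hz hiz), zero_sub, neg_sq]
  simp only [EuclideanSpace.real_norm_sq_eq, PiLp.sub_apply]
  rw [← Finset.sum_add_sum_compl T, ← Finset.sum_add_sum_compl T fun i => a i ^ 2, sum_compl]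
  ring

theorem norm_truncate_sub_sq (T : Finset ι) (a : EuclideanSpace ℝ ι) :
    ‖truncate T a - a‖ ^ 2 = ‖a‖ ^ 2 - ∑ i ∈ T, a i ^ 2 := by
  rw [norm_sub_sq_of_supp_subset (supp_truncate_subset T a), add_eq_left]
  exact Finset.sum_eq_zero fun i hi => by
    rw [truncate_apply_of_mem hi, sub_self, zero_pow two_ne_zero]

/-- `x` is a best approximation of `a` by vectors with at most `K` nonzero coordinates, i.e. an
element of the (set-valued) projection of `a` onto `C_K`. -/
def IsBestSparseApprox (K : ℕ) (a x : EuclideanSpace ℝ ι) : Prop :=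
  (supp x).card ≤ K ∧ ∀ z : EuclideanSpace ℝ ι, (supp z).card ≤ K → ‖x - a‖ ≤ ‖z - a‖

theorem IsBestSparseApprox.sum_sq_le (h : IsBestSparseApprox K a x) {T : Finset ι}
    (hT : T.card ≤ K) :
    ∑ i ∈ T, a i ^ 2 + ∑ i ∈ supp x, (x i - a i) ^ 2 ≤ ∑ i ∈ supp x, a i ^ 2 := by
  have norm_sq_le : ‖x - a‖ ^ 2 ≤ ‖truncate T a - a‖ ^ 2 :=
    pow_le_pow_left₀ (norm_nonneg _)
      (h.2 _ ((Finset.card_le_card (supp_truncate_subset T a)).trans hT)) 2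
  rw [norm_sub_sq_of_supp_subset subset_rfl, norm_truncate_sub_sq] at norm_sq_le
  linarith

theorem isBestSparseApprox_iff_isSumMaximizer :
    IsBestSparseApprox K a x ↔
      (∀ i ∈ supp x, x i = a i) ∧ IsSumMaximizer (fun i => a i ^ 2) K (supp x) := by
  refine ⟨fun h => ⟨fun i hi => ?_, h.1, fun T hT => ?_⟩, fun ⟨hxa, hcard, hmax⟩ => ⟨hcard, ?_⟩⟩
  · have sum_sq_nonpos : ∑ i ∈ supp x, (x i - a i) ^ 2 ≤ 0 := by linarith [h.sum_sq_le h.1]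
    have sq_le : (x i - a i) ^ 2 ≤ ∑ i ∈ supp x, (x i - a i) ^ 2 :=
      Finset.single_le_sum (f := fun i => (x i - a i) ^ 2) (fun _ _ => sq_nonneg _) hi
    exact sub_eq_zero.1 (sq_nonpos_iff _ |>.1 (sq_le.trans sum_sq_nonpos))
  · exact (le_add_of_nonneg_right (Finset.sum_nonneg fun _ _ => sq_nonneg _)).trans
      (h.sum_sq_le hT)
  · intro z hz
    have sum_sq_eq_zero : ∑ i ∈ supp x, (x i - a i) ^ 2 = 0 :=
      Finset.sum_eq_zero fun i hi => by rw [hxa i hi, sub_self, zero_pow two_ne_zero]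
    have sum_sq_nonneg : 0 ≤ ∑ i ∈ supp z, (z i - a i) ^ 2 :=
      Finset.sum_nonneg fun _ _ => sq_nonneg _
    rw [← sq_le_sq₀ (norm_nonneg _) (norm_nonneg _), norm_sub_sq_of_supp_subset subset_rfl,
      norm_sub_sq_of_supp_subset subset_rfl, sum_sq_eq_zero]
    linarith [hmax (supp z) hz]

end SparseApproximation

section KthLargest

variable {n K : ℕ} {a x : EuclideanSpace ℝ (Fin n)}

theorem le_MK {m : ℝ} (hK1 : 1 ≤ K) (h : K ≤ (Finset.univ.filter fun i => m ≤ |x i|).card) :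
    m ≤ MK K x := by
  have bddAbove : BddAbove {m : ℝ | ∃ s : Finset (Fin n), s.card = K ∧ ∀ i ∈ s, m ≤ |x i|} := by
    refine ⟨‖x‖, ?_⟩
    rintro m ⟨s, hs, hm⟩
    obtain ⟨i, hi⟩ := Finset.card_pos.1 (hK1.trans_eq hs.symm)
    exact (hm i hi).trans (PiLp.norm_apply_le x i)
  obtain ⟨s, hsub, hs⟩ := Finset.exists_subset_card_eq h
  exact le_csSup bddAbove ⟨s, hs, fun i hi => (Finset.mem_filter_univ i).1 (hsub hi)⟩

theorem MK_le {b : ℝ} (hKn : K ≤ n) (h : (Finset.univ.filter fun i => b < |x i|).card < K) :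
    MK K x ≤ b := by
  obtain ⟨s, -, hs⟩ := Finset.exists_subset_card_eq (hKn.trans_eq (Finset.card_fin n).symm)
  refine csSup_le ⟨0, s, hs, fun _ _ => abs_nonneg _⟩ ?_
  rintro m ⟨t, ht, hm⟩
  by_contra! hbm
  have t_subset : t ⊆ Finset.univ.filter fun i => b < |x i| := fun i hi =>
    (Finset.mem_filter_univ i).2 (hbm.trans_le (hm i hi))
  exact (Finset.card_le_card t_subset).not_gt (ht ▸ h)

theorem MK_nonneg (hK1 : 1 ≤ K) (hKn : K ≤ n) : 0 ≤ MK K x :=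
  le_MK hK1 (by simpa only [abs_nonneg, Finset.filter_true, Finset.card_fin] using hKn)

theorem MK_eq_zero_of_card_supp_lt (hK1 : 1 ≤ K) (hKn : K ≤ n) (hx : (supp x).card < K) :
    MK K x = 0 :=
  (MK_le hKn (by simpa only [abs_pos, supp] using hx)).antisymm (MK_nonneg hK1 hKn)

theorem MK_le_abs_of_mem_supp (hKn : K ≤ n) (hx : (supp x).card ≤ K) {j : Fin n}
    (hj : j ∈ supp x) : MK K x ≤ |x j| := by
  have ssubset_supp : (Finset.univ.filter fun i => |x j| < |x i|) ⊂ supp x := by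
    refine Finset.ssubset_iff_of_subset (fun i hi => ?_) |>.2 ⟨j, hj, by simp⟩
    exact mem_supp.2 (abs_pos.1 ((abs_nonneg _).trans_lt ((Finset.mem_filter_univ i).1 hi)))
  exact MK_le hKn ((Finset.card_lt_card ssubset_supp).trans_le hx)

theorem IsSumMaximizer.abs_le_MK (h : IsSumMaximizer (fun i => a i ^ 2) K (supp x))
    (hxa : ∀ i ∈ supp x, x i = a i) (hK1 : 1 ≤ K) (hKn : K ≤ n) {i : Fin n} (hi : i ∉ supp x) :
    |a i| ≤ MK K x := by
  rcases h.1.lt_or_eq with hlt | heq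
  · have a_eq_zero : a i = 0 := sq_nonpos_iff _ |>.1 (h.nonpos_of_notMem hlt hi)
    rw [a_eq_zero, abs_zero]
    exact MK_nonneg hK1 hKn
  · refine le_MK hK1 (heq.ge.trans (Finset.card_le_card fun j hj => ?_))
    rw [Finset.mem_filter_univ, hxa j hj]
    exact sq_le_sq.1 (h.le_of_notMem_of_mem hi hj)

theorem isSumMaximizer_of_abs_le_MK (hK1 : 1 ≤ K) (hKn : K ≤ n) (hx : (supp x).card ≤ K)
    (hxa : ∀ i ∈ supp x, x i = a i) (ha : ∀ i ∉ supp x, |a i| ≤ MK K x) :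
    IsSumMaximizer (fun i => a i ^ 2) K (supp x) := by
  refine ⟨hx, fun T hT => sum_le_sum_of_threshold (c := MK K x ^ 2) (fun i hi => ?_)
    (fun i hi => sq_le_sq' (neg_le_of_abs_le (ha i hi)) (le_of_abs_le (ha i hi))) ?_⟩
  · rw [← hxa i hi, ← sq_abs (x i)]
    exact pow_le_pow_left₀ (MK_nonneg hK1 hKn) (MK_le_abs_of_mem_supp hKn hx hi) 2
  · rcases hx.lt_or_eq with hlt | heq
    · simp [MK_eq_zero_of_card_supp_lt hK1 hKn hlt]
    · exact nsmul_le_nsmul_left (sq_nonneg _) (hT.trans_eq heq.symm)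

theorem isBestSparseApprox_iff (hK1 : 1 ≤ K) (hKn : K ≤ n) :
    IsBestSparseApprox K a x ↔
      zeroNorm x ≤ K ∧ ∀ i, (x i = 0 → |a i| ≤ MK K x) ∧ (x i ≠ 0 → x i = a i) := by
  simp only [isBestSparseApprox_iff_isSumMaximizer, forall_and, ← mem_supp, ← notMem_supp (x := x)]
  exact ⟨fun ⟨hxa, h⟩ => ⟨h.1, fun _ => h.abs_le_MK hxa hK1 hKn, hxa⟩,
    fun ⟨hx, ha, hxa⟩ => ⟨hxa, isSumMaximizer_of_abs_le_MK hK1 hKn hx hxa ha⟩⟩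

end KthLargest

theorem stmt11_general {n : ℕ} {f : EuclideanSpace ℝ (Fin n) → ℝ}
    {g xstar : EuclideanSpace ℝ (Fin n)} (hf : HasGradientAt f g xstar)
    {K : ℕ} (hK1 : 1 ≤ K) (hKn : K ≤ n) {L : ℝ} (hL : 0 < L) :
    LStationary f K L xstar ↔
      zeroNorm xstar ≤ K ∧ ∀ i : Fin n,
        (xstar i = 0 → |g i| ≤ L * MK K xstar) ∧ (xstar i ≠ 0 → g i = 0) := by
  have lStationary_iff : LStationary f K L xstar ↔
      IsBestSparseApprox K (xstar - L⁻¹ • g) xstar := hf.gradient ▸ Iff.rfl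
  rw [lStationary_iff, isBestSparseApprox_iff hK1 hKn]
  refine and_congr_right fun _ => forall_congr' fun i => and_congr ?_ ?_
  · refine imp_congr_right fun hi => ?_
    simp only [PiLp.sub_apply, PiLp.smul_apply, smul_eq_mul, hi, zero_sub, abs_neg, abs_mul,
      abs_of_pos (inv_pos.2 hL), inv_mul_le_iff₀ hL]
  · simp only [PiLp.sub_apply, PiLp.smul_apply, smul_eq_mul, eq_comm (a := xstar i),
      sub_eq_self, mul_eq_zero, inv_eq_zero, hL.ne', false_or]

theorem stmt11 {n : ℕ} (f : EuclideanSpace ℝ (Fin n) → ℝ) (hf : ContDiff ℝ 1 f)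
    (K : ℕ) (hK1 : 1 ≤ K) (hKn : K ≤ n) (L : ℝ) (hL : 0 < L)
    (xstar : EuclideanSpace ℝ (Fin n)) :
    LStationary f K L xstar ↔
      zeroNorm xstar ≤ K ∧ ∀ i : Fin n,
        (xstar i = 0 → |gradient f xstar i| ≤ L * MK K xstar) ∧
        (xstar i ≠ 0 → gradient f xstar i = 0) :=
  stmt11_general (hf.differentiable one_ne_zero xstar).hasGradientAt hK1 hKn hL
end

section
/- Let f : ℝ^n → ℝ be continuously differentiable, let 1 ≤ K ≤ n, and suppose x* ∈ C_K is L-stationary for f for some L > 0. Then x* is a Basic Feasible point of f. -/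
open scoped Classical

/-! If `x + W ⊆ C_K` for a linear subspace `W`, then `x` is in particular the point of `x + W`
nearest to `x - L⁻¹ • ∇f(x)`, so `∇f(x)` is orthogonal to `W`. The coordinate line `W = ℝ eᵢ`
qualifies as soon as `‖x‖₀ < K` or `x i ≠ 0`. -/

theorem mem_orthogonal_of_forall_norm_le_norm_sub {𝕜 E : Type*} [RCLike 𝕜]
    [NormedAddCommGroup E] [InnerProductSpace 𝕜 E] {W : Submodule 𝕜 E} {u : E}
    (h : ∀ w ∈ W, ‖u‖ ≤ ‖u - w‖) : u ∈ Wᗮ := by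
  have norm_eq_iInf : ‖u - 0‖ = ⨅ w : W, ‖u - w‖ := by
    rw [sub_zero]
    refine le_antisymm (le_ciInf fun w => h w w.2) ?_
    have bddBelow : BddBelow (Set.range fun w : W => ‖u - w‖) :=
      ⟨‖u‖, Set.forall_mem_range.mpr fun w => h w w.2⟩
    simpa using ciInf_le bddBelow 0
  have inner_eq_zero := (W.norm_eq_iInf_iff_inner_eq_zero W.zero_mem).mp norm_eq_iInf
  rwa [sub_zero, ← W.mem_orthogonal'] at inner_eq_zero

theorem zeroNorm_add_single_le {n : ℕ} (x : EuclideanSpace ℝ (Fin n)) (i : Fin n) (a : ℝ) :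
    zeroNorm (x + EuclideanSpace.single i a) ≤ zeroNorm x + 1 := by
  refine (Finset.card_le_card fun j hj => ?_).trans (Finset.card_insert_le i _)
  by_cases hji : j = i
  · simp [hji]
  · simpa [hji] using hj

theorem zeroNorm_add_single_le_of_ne_zero {n : ℕ} {x : EuclideanSpace ℝ (Fin n)} {i : Fin n}
    (hi : x i ≠ 0) (a : ℝ) : zeroNorm (x + EuclideanSpace.single i a) ≤ zeroNorm x := by
  refine Finset.card_le_card fun j hj => ?_
  by_cases hji : j = i
  · simpa [hji] using hi
  · simpa [hji] using hj

namespace LStationary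

variable {n K : ℕ} {f : EuclideanSpace ℝ (Fin n) → ℝ} {L : ℝ} {x : EuclideanSpace ℝ (Fin n)}

theorem gradient_mem_orthogonal (hx : LStationary f K L x) (hL : L ≠ 0)
    {W : Submodule ℝ (EuclideanSpace ℝ (Fin n))} (hW : ∀ w ∈ W, zeroNorm (x + w) ≤ K) :
    gradient f x ∈ Wᗮ := by
  have smul_gradient_mem : L⁻¹ • gradient f x ∈ Wᗮ := by
    refine mem_orthogonal_of_forall_norm_le_norm_sub fun w hw => ?_
    have nearest := hx.2 (x + -w) (hW (-w) (W.neg_mem hw))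
    rwa [sub_sub_cancel, add_sub_right_comm, sub_sub_cancel, ← sub_eq_add_neg] at nearest
  exact (Wᗮ.smul_mem_iff (inv_ne_zero hL)).mp smul_gradient_mem

theorem gradient_apply_eq_zero (hx : LStationary f K L x) (hL : L ≠ 0) {i : Fin n}
    (hi : ∀ a : ℝ, zeroNorm (x + EuclideanSpace.single i a) ≤ K) : gradient f x i = 0 := by
  have line_feasible : ∀ w ∈ Submodule.span ℝ {EuclideanSpace.single i (1 : ℝ)},
      zeroNorm (x + w) ≤ K := by
    intro w hw
    obtain ⟨a, rfl⟩ := Submodule.mem_span_singleton.mp hw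
    have smul_single : a • EuclideanSpace.single i (1 : ℝ) = EuclideanSpace.single i a := by
      ext j
      simp
    rw [smul_single]
    exact hi a
  have orthogonal := hx.gradient_mem_orthogonal hL line_feasible
  rw [Submodule.mem_orthogonal_singleton_iff_inner_left] at orthogonal
  simpa only [EuclideanSpace.inner_single_right, one_mul, conj_trivial] using orthogonal

end LStationary

theorem stmt12_general {n : ℕ} {f : EuclideanSpace ℝ (Fin n) → ℝ} {K : ℕ}
    {xstar : EuclideanSpace ℝ (Fin n)} (_hf : DifferentiableAt ℝ f xstar) {L : ℝ} (hL : L ≠ 0)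
    (hstat : LStationary f K L xstar) : BasicFeasible f K xstar := by
  refine ⟨hstat.1, fun hlt => ?_, fun hcard i hi => ?_⟩
  · ext i
    exact hstat.gradient_apply_eq_zero hL fun a => (zeroNorm_add_single_le xstar i a).trans hlt
  · exact hstat.gradient_apply_eq_zero hL fun a =>
      (zeroNorm_add_single_le_of_ne_zero hi a).trans hcard.le

theorem stmt12 {n : ℕ} (f : EuclideanSpace ℝ (Fin n) → ℝ) (hf : ContDiff ℝ 1 f)
    (K : ℕ) (hK1 : 1 ≤ K) (hKn : K ≤ n)
    (xstar : EuclideanSpace ℝ (Fin n)) (hxstar : zeroNorm xstar ≤ K)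
    (L : ℝ) (hL : 0 < L) (hstat : LStationary f K L xstar) :
    BasicFeasible f K xstar :=
  stmt12_general (hf.differentiable one_ne_zero xstar) hL.ne' hstat
end

section
/- Let f : ℝ^n → ℝ be differentiable with ∇f Lipschitz continuous with constant L(f) > 0, i.e., ‖∇f(x) − ∇f(y)‖ ≤ L(f)‖x − y‖ for all x, y ∈ ℝ^n, and let 1 ≤ K ≤ n. If x* is an optimal solution of min{f(x) : x ∈ C_K}, then for every L > L(f), x* is L-stationary for f. -/
open scoped Classical

/-!
Let `q y = f x + ⟪∇f x, y - x⟫ + (L / 2) ‖y - x‖²`. If `∇f` is `L`-Lipschitz, then `f ≤ q` by the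
descent lemma, with equality at `x`; so a minimizer `x` of `f` over a set `C` also minimizes `q`
over `C`. Completing the square, `q y` is `(L / 2) ‖y - (x - L⁻¹ • ∇f x)‖²` plus a constant, so
minimizing `q` is the same as projecting the gradient step onto `C`.
-/

section TaylorBound

variable {E F : Type*} [NormedAddCommGroup E] [NormedSpace ℝ E]
  [NormedAddCommGroup F] [NormedSpace ℝ F]

theorem norm_sub_sub_deriv_le_half {g g' : ℝ → F} {M : ℝ}
    (hg : ∀ t ∈ Set.Icc (0 : ℝ) 1, HasDerivWithinAt g (g' t) (Set.Icc 0 1) t)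
    (hM : ∀ t ∈ Set.Ico (0 : ℝ) 1, ‖g' t - g' 0‖ ≤ M * t) :
    ‖g 1 - g 0 - g' 0‖ ≤ M / 2 := by
  let r : ℝ → F := fun t => g t - g 0 - t • g' 0
  have hr : ∀ t ∈ Set.Icc (0 : ℝ) 1, HasDerivWithinAt r (g' t - g' 0) (Set.Icc 0 1) t :=
    fun t ht => (((hg t ht).sub_const (g 0)).sub
      ((hasDerivWithinAt_id t _).smul_const (g' 0))).congr_deriv (by rw [one_smul])
  have hbound (t : ℝ) : HasDerivAt (fun t => M / 2 * t ^ 2) (M * t) t :=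
    ((hasDerivAt_pow 2 t).const_mul (M / 2)).congr_deriv (by ring)
  have hr_le : ‖r 1‖ ≤ M / 2 * 1 ^ 2 :=
    image_norm_le_of_norm_deriv_right_le_deriv_boundary
      (fun t ht => (hr t ht).continuousWithinAt)
      (fun t ht => (hr t (Set.Ico_subset_Icc_self ht)).mono_of_mem_nhdsWithin
        (Icc_mem_nhdsGE_of_mem ht))
      (by simp [r]) hbound hM (Set.right_mem_Icc.2 zero_le_one)
  simpa [r] using hr_le

theorem norm_sub_sub_fderiv_le_half_mul_sq {f : E → F} {f' : E → E →L[ℝ] F} {s : Set E} {x y : E}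
    {L : ℝ} (hs : StarConvex ℝ x s) (hy : y ∈ s)
    (hf : ∀ z ∈ s, HasFDerivWithinAt f (f' z) s z)
    (hL : ∀ z ∈ s, ‖f' z - f' x‖ ≤ L * ‖z - x‖) :
    ‖f y - f x - f' x (y - x)‖ ≤ L / 2 * ‖y - x‖ ^ 2 := by
  let γ : ℝ → E := fun t => x + t • (y - x)
  have hγ_mem : Set.MapsTo γ (Set.Icc 0 1) s := fun t ht => hs.add_smul_sub_mem hy ht.1 ht.2
  have hγ (t : ℝ) : HasDerivAt γ (y - x) t :=
    (((hasDerivAt_id t).smul_const (y - x)).const_add x).congr_deriv (one_smul ℝ _)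
  have hfγ : ∀ t ∈ Set.Icc (0 : ℝ) 1,
      HasDerivWithinAt (f ∘ γ) (f' (γ t) (y - x)) (Set.Icc 0 1) t := fun t ht =>
    (hf _ (hγ_mem ht)).comp_hasDerivWithinAt t (hγ t).hasDerivWithinAt hγ_mem
  have hγ_zero : γ 0 = x := by simp [γ]
  have hγ_one : γ 1 = y := by simp [γ]
  have hderiv_le : ∀ t ∈ Set.Ico (0 : ℝ) 1,
      ‖f' (γ t) (y - x) - f' (γ 0) (y - x)‖ ≤ L * ‖y - x‖ ^ 2 * t := fun t ht =>
    calc ‖f' (γ t) (y - x) - f' (γ 0) (y - x)‖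
        = ‖(f' (γ t) - f' x) (y - x)‖ := by rw [hγ_zero, sub_apply]
      _ ≤ ‖f' (γ t) - f' x‖ * ‖y - x‖ := ContinuousLinearMap.le_opNorm _ _
      _ ≤ L * ‖γ t - x‖ * ‖y - x‖ := by
        gcongr
        exact hL _ (hγ_mem (Set.Ico_subset_Icc_self ht))
      _ = L * ‖y - x‖ ^ 2 * t := by
        rw [add_sub_cancel_left, norm_smul, Real.norm_of_nonneg ht.1]
        ring
  have htaylor := norm_sub_sub_deriv_le_half hfγ hderiv_le
  rwa [Function.comp_apply, Function.comp_apply, hγ_zero, hγ_one, mul_div_right_comm] at htaylor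

end TaylorBound

section GradientStep

variable {E : Type*} [NormedAddCommGroup E] [InnerProductSpace ℝ E]

theorem norm_sub_gradient_step_le_iff {L : ℝ} (hL : 0 < L) (x g z : E) :
    ‖x - (x - L⁻¹ • g)‖ ≤ ‖z - (x - L⁻¹ • g)‖ ↔ 0 ≤ inner ℝ g (z - x) + L / 2 * ‖z - x‖ ^ 2 := by
  have complete_square : ‖z - (x - L⁻¹ • g)‖ ^ 2 = ‖x - (x - L⁻¹ • g)‖ ^ 2 +
      2 / L * (inner ℝ g (z - x) + L / 2 * ‖z - x‖ ^ 2) := by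
    rw [sub_sub_cancel, sub_sub_eq_add_sub, add_sub_right_comm, norm_add_sq_real,
      inner_smul_right, real_inner_comm]
    field_simp
    ring
  rw [← sq_le_sq₀ (norm_nonneg _) (norm_nonneg _), complete_square, le_add_iff_nonneg_right,
    mul_nonneg_iff_of_pos_left (by positivity)]

variable [CompleteSpace E]

theorem le_add_inner_gradient_add_half_mul_sq {f : E → ℝ} {f' : E → E} {s : Set E} {x y : E}
    {L : ℝ} (hs : StarConvex ℝ x s) (hy : y ∈ s)
    (hf : ∀ z ∈ s, HasGradientWithinAt f (f' z) s z)
    (hL : ∀ z ∈ s, ‖f' z - f' x‖ ≤ L * ‖z - x‖) :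
    f y ≤ f x + inner ℝ (f' x) (y - x) + L / 2 * ‖y - x‖ ^ 2 := by
  have taylor := norm_sub_sub_fderiv_le_half_mul_sq hs hy (fun z hz => (hf z hz).hasFDerivWithinAt)
    (fun z hz => by rw [← map_sub, LinearIsometryEquiv.norm_map]; exact hL z hz)
  rw [InnerProductSpace.toDual_apply_apply] at taylor
  linarith [Real.le_norm_self (f y - f x - inner ℝ (f' x) (y - x))]

theorem stmt13_general {f : E → ℝ} {f' : E → E} {C s : Set E} {x : E} {L : ℝ} (hL : 0 < L)
    (hs : StarConvex ℝ x s) (hCs : C ⊆ s)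
    (hf : ∀ y ∈ s, HasGradientWithinAt f (f' y) s y)
    (hLip : ∀ y ∈ s, ‖f' y - f' x‖ ≤ L * ‖y - x‖) (hmin : IsMinOn f C x) :
    IsMinOn (fun z => ‖z - (x - L⁻¹ • f' x)‖) C x := by
  refine isMinOn_iff.2 fun z hz => (norm_sub_gradient_step_le_iff hL x (f' x) z).2 ?_
  have hopt : f x ≤ f z := isMinOn_iff.1 hmin z hz
  have hdescent := le_add_inner_gradient_add_half_mul_sq hs (hCs hz) hf hLip
  linarith

end GradientStep

theorem stmt13 {n : ℕ} (f : EuclideanSpace ℝ (Fin n) → ℝ) (hf : Differentiable ℝ f)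
    (Lf : ℝ) (hLf : 0 < Lf)
    (hLip : ∀ x y : EuclideanSpace ℝ (Fin n),
      ‖gradient f x - gradient f y‖ ≤ Lf * ‖x - y‖)
    (K : ℕ) (hK1 : 1 ≤ K) (hKn : K ≤ n)
    (xstar : EuclideanSpace ℝ (Fin n)) (hfeas : zeroNorm xstar ≤ K)
    (hopt : ∀ x : EuclideanSpace ℝ (Fin n), zeroNorm x ≤ K → f xstar ≤ f x) :
    ∀ L : ℝ, L > Lf → LStationary f K L xstar :=
  fun _ hL => ⟨hfeas, stmt13_general (hLf.trans hL) (starConvex_univ _) (Set.subset_univ _)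
    (fun y _ => hasGradientWithinAt_univ.2 (hf y).hasGradientAt)
    (fun y _ => (hLip y xstar).trans (by gcongr)) hopt⟩
end

section
/- Let f : ℝ^n → ℝ be continuously differentiable and let 1 ≤ K ≤ n. If x* is an optimal solution of min{f(x) : x ∈ C_K}, i.e., x* ∈ C_K and f(x*) ≤ f(x) for all x ∈ C_K, then x* is a Basic Feasible point of f. -/
open scoped Classical

/-!
Both signs of a basis vector `eᵢ` are tangent directions of the feasible set at `x` whenever the
whole line `x + t eᵢ` is feasible, and along such a line first-order optimality annihilates the
`i`-th partial derivative. If `‖x‖₀ < K` there is room for one more nonzero coordinate, so this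
applies to every `i`; otherwise it applies to the coordinates that are already nonzero.
-/

theorem fderiv_apply_eq_zero_of_isLocalMinOn {E : Type*} [NormedAddCommGroup E] [NormedSpace ℝ E]
    {f : E → ℝ} {s : Set E} {x v : E} (hf : DifferentiableAt ℝ f x) (hmin : IsLocalMinOn f s x)
    (hline : ∀ t : ℝ, x + t • v ∈ s) : fderiv ℝ f x v = 0 := by
  have hpos : v ∈ posTangentConeAt s x :=
    mem_posTangentConeAt_of_frequently_mem <| .of_forall hline
  have hneg : -v ∈ posTangentConeAt s x :=
    mem_posTangentConeAt_of_frequently_mem <| .of_forall fun t ↦ by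
      simpa only [smul_neg, neg_smul] using hline (-t)
  exact hmin.hasFDerivWithinAt_eq_zero hf.hasFDerivAt.hasFDerivWithinAt hpos hneg

theorem gradient_apply_eq_fderiv_single {ι : Type*} [Fintype ι] [DecidableEq ι]
    (f : EuclideanSpace ℝ ι → ℝ) (x : EuclideanSpace ℝ ι) (i : ι) :
    gradient f x i = fderiv ℝ f x (EuclideanSpace.single i 1) := by
  rw [← inner_gradient_left, EuclideanSpace.inner_single_right, one_mul, conj_trivial]

theorem gradient_apply_eq_zero_of_isLocalMinOn {ι : Type*} [Fintype ι] [DecidableEq ι]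
    {f : EuclideanSpace ℝ ι → ℝ} {s : Set (EuclideanSpace ℝ ι)} {x : EuclideanSpace ℝ ι} {i : ι}
    (hf : DifferentiableAt ℝ f x) (hmin : IsLocalMinOn f s x)
    (hline : ∀ t : ℝ, x + t • EuclideanSpace.single i (1 : ℝ) ∈ s) : gradient f x i = 0 := by
  rw [gradient_apply_eq_fderiv_single, fderiv_apply_eq_zero_of_isLocalMinOn hf hmin hline]

section SparseSet

variable {n K : ℕ} {x : EuclideanSpace ℝ (Fin n)}

/-- The feasible set `C_K = {x : ‖x‖₀ ≤ K}` of the cardinality constraint. -/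
def sparseSet (n K : ℕ) : Set (EuclideanSpace ℝ (Fin n)) :=
  {x | zeroNorm x ≤ K}

theorem zeroNorm_add_smul_single_le_card_insert (x : EuclideanSpace ℝ (Fin n)) (i : Fin n) (t : ℝ) :
    zeroNorm (x + t • EuclideanSpace.single i (1 : ℝ)) ≤
      (insert i (Finset.univ.filter fun j ↦ x j ≠ 0)).card := by
  refine Finset.card_le_card fun j hj ↦ ?_
  rcases eq_or_ne j i with rfl | hji
  · exact Finset.mem_insert_self _ _
  · simpa [hji] using hj

theorem add_smul_single_mem_sparseSet_of_lt (hx : zeroNorm x < K) (i : Fin n) (t : ℝ) :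
    x + t • EuclideanSpace.single i (1 : ℝ) ∈ sparseSet n K :=
  calc
    zeroNorm (x + t • EuclideanSpace.single i (1 : ℝ)) ≤ _ :=
      zeroNorm_add_smul_single_le_card_insert x i t
    _ ≤ zeroNorm x + 1 := Finset.card_insert_le _ _
    _ ≤ K := hx

theorem add_smul_single_mem_sparseSet_of_ne_zero (hx : x ∈ sparseSet n K) {i : Fin n} (hi : x i ≠ 0)
    (t : ℝ) : x + t • EuclideanSpace.single i (1 : ℝ) ∈ sparseSet n K :=
  calc
    zeroNorm (x + t • EuclideanSpace.single i (1 : ℝ)) ≤ _ :=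
      zeroNorm_add_smul_single_le_card_insert x i t
    _ = zeroNorm x := by rw [Finset.insert_eq_of_mem (by simpa using hi), zeroNorm]
    _ ≤ K := hx

theorem stmt14_general {f : EuclideanSpace ℝ (Fin n) → ℝ} (hf : DifferentiableAt ℝ f x)
    (hx : x ∈ sparseSet n K) (hmin : IsLocalMinOn f (sparseSet n K) x) :
    BasicFeasible f K x := by
  refine ⟨hx, fun hlt ↦ ?_, fun _ i hi ↦ ?_⟩
  · ext i
    exact gradient_apply_eq_zero_of_isLocalMinOn hf hmin
      (add_smul_single_mem_sparseSet_of_lt hlt i)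
  · exact gradient_apply_eq_zero_of_isLocalMinOn hf hmin
      (add_smul_single_mem_sparseSet_of_ne_zero hx hi)

end SparseSet

theorem stmt14 {n : ℕ} (f : EuclideanSpace ℝ (Fin n) → ℝ) (hf : ContDiff ℝ 1 f)
    (K : ℕ) (hK1 : 1 ≤ K) (hKn : K ≤ n)
    (xstar : EuclideanSpace ℝ (Fin n)) (hfeas : zeroNorm xstar ≤ K)
    (hopt : ∀ x : EuclideanSpace ℝ (Fin n), zeroNorm x ≤ K → f xstar ≤ f x) :
    BasicFeasible f K xstar :=
  stmt14_general (hf.differentiable one_ne_zero xstar) hfeas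
    (isMinOn_iff.2 hopt).localize
end
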